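/- Let X be a Banach space, 0 < α < 1, T(·) an analytic semigroup generated by -A satisfying ‖T(t)x - T(s)x‖ ≤ C_η (t-s)^η s^{-η} ‖x‖ for 0 < s < t and 0 < η < 1, and let h_α be the probability density with moments ∫₀^∞ θ^γ h_α(θ)dθ = Γ(1+γ)/Γ(1+αγ) for γ > -1. If u₀ ∈ D(A^q) with β/α ≤ q ≤ 1 and β < α, then S₀(t) := ∫₀^∞ h_α(θ) T(t^α θ) u₀ dθ is β-Hölder continuous on [0,T]; in particular ‖S₀(t) - u₀‖ ≤ (C_q Γ(1+q)/Γ(1+αq)) ‖A^q u₀‖ t^{αq} ≤ C t^β. -/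

import Mathlib

/-!
The Hölder estimate for `T` alone is singular at `s = 0` and cannot give the exponent `β = α q`.
Instead, the time increment is moved from the orbit to the density: with `r = (t / s) ^ α`,
a change of variables gives
`S₀(t) - S₀(s) = ∫ (h θ - r h(r θ)) (T(t ^ α θ) u₀ - u₀) dθ`,
so that `‖S₀(t) - S₀(s)‖ ≤ C t ^ (α q) ∫ θ ^ q |h θ - r h(r θ)| dθ`. By the identity theorem the
moments determine the Mellin transform of `h`, namely `Γ(z) / Γ(1 + α (z - 1))`, and the reflection
formula shows that it decays exponentially on vertical lines, with rate `(1 - α) π / 2`. Hence, by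
Mellin inversion, each `θ ^ (n + 1) h θ` is bounded and Lipschitz in `log θ`, which makes the last
integral `O(log r)`. For `t ≤ 2 s` this is `O(((t - s) / s) ^ β)`, while for `t > 2 s` the bound on
`S₀ - u₀` suffices.
-/

open MeasureTheory Set Real

section Gamma

lemma sinh_mul_le {α y : ℝ} (hα : α ≤ 1) (hy : 0 ≤ y) :
    sinh (α * y) ≤ exp (-((1 - α) * y)) * sinh y := by
  have hexp : exp (-((1 - α) * y)) * exp y = exp (α * y) := by
    rw [← exp_add]
    ring_nf
  have hexp_neg : exp (-((1 - α) * y)) * exp (-y) ≤ exp (-(α * y)) := by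
    rw [← exp_add, exp_le_exp]
    nlinarith
  rw [sinh_eq, sinh_eq]
  linarith

lemma norm_Gamma_one_add_mul_I_sq_mul_sinh (y : ℝ) :
    ‖Complex.Gamma (1 + y * Complex.I)‖ ^ 2 * sinh (π * y) = π * y := by
  rcases eq_or_ne y 0 with rfl | hy
  · simp
  have hsinh : (sinh (π * y) : ℂ) ≠ 0 := by
    exact_mod_cast sinh_eq_zero.not.2 (by positivity)
  have hsin : Complex.sin (π * (y * Complex.I)) = sinh (π * y) * Complex.I := by
    rw [← mul_assoc, Complex.sin_mul_I]
    push_cast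
    rfl
  have hconj : Complex.Gamma (1 - y * Complex.I) =
      (starRingEnd ℂ) (Complex.Gamma (1 + y * Complex.I)) := by
    rw [← Complex.Gamma_conj]
    simp [sub_eq_add_neg]
  have hsucc : Complex.Gamma (1 + y * Complex.I) =
      y * Complex.I * Complex.Gamma (y * Complex.I) := by
    rw [add_comm, Complex.Gamma_add_one _ (by simp [hy])]
  have hnorm : ((‖Complex.Gamma (1 + y * Complex.I)‖ ^ 2 : ℝ) : ℂ) =
      y * Complex.I * (π / (sinh (π * y) * Complex.I)) := by
    rw [← Complex.normSq_eq_norm_sq, ← Complex.mul_conj, ← hconj, hsucc, mul_assoc,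
      Complex.Gamma_mul_Gamma_one_sub, hsin]
  have hprod : ((‖Complex.Gamma (1 + y * Complex.I)‖ ^ 2 : ℝ) : ℂ) * sinh (π * y) = π * y := by
    rw [hnorm]
    field_simp
  exact_mod_cast hprod

lemma norm_Gamma_one_add_mul_I_sq_mul_sinh_abs (y : ℝ) :
    ‖Complex.Gamma (1 + y * Complex.I)‖ ^ 2 * sinh (π * |y|) = π * |y| := by
  have h := norm_Gamma_one_add_mul_I_sq_mul_sinh y
  rcases abs_choice y with hy | hy <;> rw [hy]
  · exact h
  · rw [mul_neg, sinh_neg, mul_neg, h]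

lemma norm_Gamma_one_add_mul_I_le {α : ℝ} (hα : 0 < α) (hα1 : α ≤ 1) (y : ℝ) :
    ‖Complex.Gamma (1 + y * Complex.I)‖ ≤
      (√α)⁻¹ * exp (-((1 - α) * π / 2 * |y|)) *
        ‖Complex.Gamma (1 + (α * y : ℝ) * Complex.I)‖ := by
  rcases eq_or_ne y 0 with rfl | hy
  · simpa using one_le_inv₀ (sqrt_pos.2 hα) |>.2 (sqrt_le_one.2 hα1)
  set a := ‖Complex.Gamma (1 + y * Complex.I)‖ with ha
  set b := ‖Complex.Gamma (1 + (α * y : ℝ) * Complex.I)‖ with hb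
  have hpos : 0 < π * |y| := by positivity
  have hab : α * a ^ 2 * sinh (π * |y|) = b ^ 2 * sinh (α * (π * |y|)) := by
    have hya := norm_Gamma_one_add_mul_I_sq_mul_sinh_abs y
    have hyb := norm_Gamma_one_add_mul_I_sq_mul_sinh_abs (α * y)
    rw [abs_mul, abs_of_pos hα, mul_left_comm] at hyb
    rw [hb, hyb, mul_assoc, ha, hya]
  have hsq : α * a ^ 2 ≤ exp (-((1 - α) * (π * |y|))) * b ^ 2 := by
    refine le_of_mul_le_mul_right ?_ (sinh_pos_iff.2 hpos)
    calc α * a ^ 2 * sinh (π * |y|) = b ^ 2 * sinh (α * (π * |y|)) := hab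
      _ ≤ b ^ 2 * (exp (-((1 - α) * (π * |y|))) * sinh (π * |y|)) := by
          gcongr
          exact sinh_mul_le hα1 hpos.le
      _ = exp (-((1 - α) * (π * |y|))) * b ^ 2 * sinh (π * |y|) := by ring
  refine le_of_sq_le_sq ?_ (by positivity)
  calc a ^ 2 = α⁻¹ * (α * a ^ 2) := by field_simp
    _ ≤ α⁻¹ * (exp (-((1 - α) * (π * |y|))) * b ^ 2) := by gcongr
    _ = ((√α)⁻¹ * exp (-((1 - α) * π / 2 * |y|)) * b) ^ 2 := by
      rw [mul_pow, mul_pow, inv_pow, sq_sqrt hα.le, ← exp_nat_mul, mul_assoc]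
      ring_nf

lemma norm_betaIntegral_le {u v : ℂ} (hu : 0 < u.re) (hv : 0 < v.re) :
    ‖Complex.betaIntegral u v‖ ≤
      Real.Gamma u.re * Real.Gamma v.re / Real.Gamma (u.re + v.re) := by
  have hre : Complex.betaIntegral u.re v.re =
      ((∫ x in (0:ℝ)..1, ‖(x : ℂ) ^ (u - 1) * (1 - (x : ℂ)) ^ (v - 1)‖ : ℝ) : ℂ) := by
    rw [Complex.betaIntegral, ← intervalIntegral.integral_ofReal]
    refine intervalIntegral.integral_congr_Ioo_of_le zero_le_one fun x hx => ?_
    have hx1 : 0 < 1 - x := sub_pos.2 hx.2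
    have hnorm : ‖(1 - (x : ℂ)) ^ (v - 1)‖ = (1 - x) ^ (v.re - 1) := by
      simpa using Complex.norm_cpow_eq_rpow_re_of_pos hx1 (v - 1)
    rw [norm_mul, Complex.norm_cpow_eq_rpow_re_of_pos hx.1, hnorm]
    push_cast [Complex.ofReal_cpow hx.1.le, Complex.ofReal_cpow hx1.le]
    simp
  have hbeta := Complex.Gamma_mul_Gamma_eq_betaIntegral (s := u.re) (t := v.re) (by simpa)
    (by simpa)
  rw [hre, ← Complex.ofReal_add] at hbeta
  simp only [Complex.Gamma_ofReal] at hbeta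
  have hΓ : 0 < Real.Gamma (u.re + v.re) := Real.Gamma_pos_of_pos (by positivity)
  rw [le_div_iff₀' hΓ]
  calc _ ≤ Real.Gamma (u.re + v.re) *
        ∫ x in (0:ℝ)..1, ‖(x : ℂ) ^ (u - 1) * (1 - (x : ℂ)) ^ (v - 1)‖ := by
        gcongr
        exact intervalIntegral.norm_integral_le_integral_norm zero_le_one
    _ = Real.Gamma u.re * Real.Gamma v.re := by exact_mod_cast hbeta.symm

lemma norm_Gamma_mul_Gamma_le {s : ℂ} {a : ℝ} (hs : 0 < s.re) (ha : 0 ≤ a) :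
    ‖Complex.Gamma s‖ * Real.Gamma (s.re + a) ≤ Real.Gamma s.re * ‖Complex.Gamma (s + a)‖ := by
  rcases ha.eq_or_lt with rfl | ha
  · simp [mul_comm]
  have hΓa : 0 < Real.Gamma a := Real.Gamma_pos_of_pos ha
  have : 0 < Real.Gamma (s.re + a) := Real.Gamma_pos_of_pos (by positivity)
  have hbeta := congrArg norm
    (Complex.Gamma_mul_Gamma_eq_betaIntegral (s := s) (t := a) hs (by simpa))
  rw [norm_mul, norm_mul, Complex.Gamma_ofReal, Complex.norm_real, norm_of_nonneg hΓa.le] at hbeta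
  refine le_of_mul_le_mul_right ?_ hΓa
  calc ‖Complex.Gamma s‖ * Real.Gamma (s.re + a) * Real.Gamma a
      = ‖Complex.Gamma (s + a)‖ * ‖Complex.betaIntegral s a‖ * Real.Gamma (s.re + a) := by
        rw [← hbeta]
        ring
    _ ≤ ‖Complex.Gamma (s + a)‖ * (Real.Gamma s.re * Real.Gamma a / Real.Gamma (s.re + a)) *
          Real.Gamma (s.re + a) := by
        gcongr
        simpa using norm_betaIntegral_le (v := a) hs (by simpa)
    _ = Real.Gamma s.re * ‖Complex.Gamma (s + a)‖ * Real.Gamma a := by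
        field_simp

lemma norm_Gamma_nat_add_one_add_mul_I_le (n : ℕ) (y : ℝ) :
    ‖Complex.Gamma (n + 1 + y * Complex.I)‖ ≤
      n.factorial * (1 + |y|) ^ n * ‖Complex.Gamma (1 + y * Complex.I)‖ := by
  induction n with
  | zero => simp
  | succ n ih =>
    have hne : (n + 1 + y * Complex.I : ℂ) ≠ 0 := fun h => by
      have hre : (n + 1 : ℝ) = 0 := by simpa using congrArg Complex.re h
      exact absurd hre (by positivity)
    have hnorm : ‖(n + 1 + y * Complex.I : ℂ)‖ ≤ (n + 1) * (1 + |y|) := by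
      calc ‖(n + 1 + y * Complex.I : ℂ)‖ ≤ ‖((n + 1 : ℕ) : ℂ)‖ + ‖(y : ℂ) * Complex.I‖ := by
            simpa using norm_add_le ((n : ℂ) + 1) (y * Complex.I)
        _ = (n + 1) + |y| := by rw [Complex.norm_natCast]; simp
        _ ≤ (n + 1) * (1 + |y|) := by nlinarith [mul_nonneg n.cast_nonneg (abs_nonneg y)]
    calc ‖Complex.Gamma ((n + 1 : ℕ) + 1 + y * Complex.I)‖
        = ‖(n + 1 + y * Complex.I : ℂ)‖ * ‖Complex.Gamma (n + 1 + y * Complex.I)‖ := by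
          rw [← norm_mul, ← Complex.Gamma_add_one _ hne]
          push_cast
          ring_nf
      _ ≤ (n + 1) * (1 + |y|) *
            (n.factorial * (1 + |y|) ^ n * ‖Complex.Gamma (1 + y * Complex.I)‖) := by gcongr
      _ = _ := by rw [Nat.factorial_succ]; push_cast; ring

lemma norm_Gamma_div_Gamma_le {α : ℝ} (hα : 0 < α) (hα1 : α ≤ 1) (n : ℕ) (y : ℝ) :
    ‖Complex.Gamma (n + 1 + y * Complex.I) / Complex.Gamma (1 + α * (n + y * Complex.I))‖ ≤
      n.factorial / (√α * Real.Gamma (1 + α * n)) *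
        ((1 + |y|) ^ n * exp (-((1 - α) * π / 2 * |y|))) := by
  set e := exp (-((1 - α) * π / 2 * |y|))
  have hΓ : 0 < Real.Gamma (1 + α * n) := Real.Gamma_pos_of_pos (by positivity)
  have hne : Complex.Gamma (1 + α * (n + y * Complex.I)) ≠ 0 :=
    Complex.Gamma_ne_zero_of_re_pos (by
      suffices 0 < 1 + α * n by simpa
      positivity)
  have hshift : ‖Complex.Gamma (1 + (α * y : ℝ) * Complex.I)‖ ≤
      ‖Complex.Gamma (1 + α * (n + y * Complex.I))‖ / Real.Gamma (1 + α * n) := by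
    rw [le_div_iff₀ hΓ]
    have hle := norm_Gamma_mul_Gamma_le (s := 1 + (α * y : ℝ) * Complex.I) (a := α * n) (by simp)
      (by positivity)
    have hre : (1 + (α * y : ℝ) * Complex.I).re = 1 := by simp
    have hadd : 1 + (α * y : ℝ) * Complex.I + (α * n : ℝ) = 1 + α * (n + y * Complex.I) := by
      push_cast
      ring
    rwa [hre, hadd, Real.Gamma_one, one_mul] at hle
  rw [norm_div, div_le_iff₀ (norm_pos_iff.2 hne)]
  calc ‖Complex.Gamma (n + 1 + y * Complex.I)‖
      ≤ n.factorial * (1 + |y|) ^ n * ‖Complex.Gamma (1 + y * Complex.I)‖ :=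
        norm_Gamma_nat_add_one_add_mul_I_le n y
    _ ≤ n.factorial * (1 + |y|) ^ n * ((√α)⁻¹ * e *
          (‖Complex.Gamma (1 + α * (n + y * Complex.I))‖ / Real.Gamma (1 + α * n))) := by
        gcongr
        exact (norm_Gamma_one_add_mul_I_le hα hα1 y).trans (by gcongr)
    _ = _ := by field_simp

lemma integrable_one_add_abs_pow_mul_exp_neg {b : ℝ} (hb : 0 < b) (n : ℕ) :
    Integrable fun x : ℝ => (1 + |x|) ^ n * exp (-(b * |x|)) := by
  have hdom : Integrable fun x : ℝ =>
      (n + 2).factorial * exp b / b ^ (n + 2) * (1 + ‖x‖) ^ (-2 : ℝ) :=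
    (integrable_one_add_norm (by simp)).const_mul _
  refine hdom.mono' (by fun_prop) (.of_forall fun x => ?_)
  have hx : 0 < 1 + |x| := by positivity
  have hpow := pow_div_factorial_le_exp (x := b * (1 + |x|)) (by positivity) (n + 2)
  rw [div_le_iff₀ (by positivity), mul_pow, pow_add (1 + |x|), mul_add, mul_one, exp_add] at hpow
  rw [norm_of_nonneg (by positivity), norm_eq_abs, rpow_neg hx.le, rpow_two, exp_neg,
    ← div_eq_mul_inv, ← div_eq_mul_inv, div_div, div_le_div_iff₀ (by positivity) (by positivity)]
  linarith

end Gamma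

section FourierInversion

open FourierTransform

variable {V E : Type*} [NormedAddCommGroup V] [InnerProductSpace ℝ V] [FiniteDimensional ℝ V]
  [MeasurableSpace V] [BorelSpace V] [NormedAddCommGroup E] [NormedSpace ℂ E]

lemma continuous_fourier {f : V → E} (hf : Integrable f) : Continuous (𝓕 f) :=
  VectorFourier.fourierIntegral_continuous continuous_fourierChar continuous_inner hf

lemma continuous_fourierInv {f : V → E} (hf : Integrable f) : Continuous (𝓕⁻ f) := by
  simpa [Function.comp_def, ← fourierInv_eq_fourier_neg] using
    (continuous_fourier hf).comp continuous_neg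

variable [CompleteSpace E]

lemma integral_fourier_smul_eq {f : V → ℂ} {g : V → E} (hf : Integrable f) (hg : Integrable g) :
    ∫ w, 𝓕 f w • g w = ∫ v, f v • 𝓕 g v := by
  have hflip := VectorFourier.integral_fourierIntegral_smul_eq_flip (L := innerₗ V)
    continuous_fourierChar continuous_inner hf hg
  rwa [flip_innerₗ] at hflip

lemma integral_fourierInv_smul_eq {f : V → ℂ} {g : V → E} (hf : Integrable f)
    (hg : Integrable g) : ∫ w, 𝓕⁻ f w • g w = ∫ v, f v • 𝓕⁻ g v := by
  simp_rw [fourierInv_eq_fourier_neg g, fourierInv_eq_fourier_comp_neg f]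
  rw [integral_fourier_smul_eq hf.comp_neg hg,
    ← integral_neg_eq_self (fun v => f (-v) • 𝓕 g v)]
  simp only [neg_neg]

lemma ae_eq_fourierInv_fourier {f : V → E} (hf : Integrable f) (hFf : Integrable (𝓕 f)) :
    f =ᵐ[volume] 𝓕⁻ (𝓕 f) := by
  refine ae_eq_of_integral_contDiff_smul_eq hf.locallyIntegrable
    (continuous_fourierInv hFf).locallyIntegrable fun φ hφ hφc => ?_
  let ψ : SchwartzMap V ℂ := HasCompactSupport.toSchwartzMap (f := fun x => (φ x : ℂ))
    (hφc.comp_left (g := ((↑) : ℝ → ℂ)) Complex.ofReal_zero) (Complex.ofRealCLM.contDiff.comp hφ)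
  have hψφ (x : V) (e : E) : ψ x • e = φ x • e := Complex.coe_smul (φ x) e
  have hψ : 𝓕 (𝓕⁻ (ψ : V → ℂ)) = ψ := by
    rw [← SchwartzMap.fourierInv_coe, ← SchwartzMap.fourier_coe,
      FourierInvPair.fourier_fourierInv_eq]
  have hψ_int : Integrable (𝓕⁻ (ψ : V → ℂ)) := by
    rw [← SchwartzMap.fourierInv_coe]
    exact (𝓕⁻ ψ).integrable
  calc ∫ x, φ x • f x = ∫ x, 𝓕 (𝓕⁻ (ψ : V → ℂ)) x • f x := by simp only [hψ, hψφ]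
    _ = ∫ x, (𝓕⁻ (ψ : V → ℂ)) x • 𝓕 f x := integral_fourier_smul_eq hψ_int hf
    _ = ∫ x, ψ x • 𝓕⁻ (𝓕 f) x := integral_fourierInv_smul_eq ψ.integrable hFf
    _ = ∫ x, φ x • 𝓕⁻ (𝓕 f) x := by simp only [hψφ]

end FourierInversion

section MellinInversion

open FourierTransform

variable {E : Type*} [NormedAddCommGroup E] [NormedSpace ℂ E]

lemma ofReal_cpow_smul {x : ℝ} (hx : 0 ≤ x) (r : ℝ) (e : E) :
    (x : ℂ) ^ (r : ℂ) • e = x ^ r • e := by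
  rw [← Complex.ofReal_cpow hx, Complex.coe_smul]

lemma integrable_exp_smul_comp_exp_neg {f : ℝ → E} {σ : ℝ} (hf : MellinConvergent f σ) :
    Integrable fun u : ℝ => exp (-σ * u) • f (exp (-u)) := by
  have hderiv : ∀ u ∈ univ, HasDerivWithinAt (fun u => exp (-u)) (-exp (-u)) univ u := fun u _ =>
    (by simpa using (hasDerivAt_neg u).exp : HasDerivAt _ _ u).hasDerivWithinAt
  have himage : (fun u => exp (-u)) '' univ = Ioi 0 := by
    rw [image_univ, ← range_exp]
    exact neg_surjective.range_comp exp
  have hinj : InjOn (fun u => exp (-u)) univ :=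
    (exp_injective.comp neg_injective).injOn
  rw [MellinConvergent, ← himage, integrableOn_image_iff_integrableOn_abs_deriv_smul
    MeasurableSet.univ hderiv hinj, integrableOn_univ] at hf
  refine hf.congr (.of_forall fun u => ?_)
  have hcpow := ofReal_cpow_smul (exp_pos (-u)).le (σ - 1) (f (exp (-u)))
  rw [Complex.ofReal_sub, Complex.ofReal_one] at hcpow
  simp only
  rw [hcpow, abs_neg, abs_of_pos (exp_pos _), smul_smul, ← exp_mul, ← exp_add]
  ring_nf

lemma ae_restrict_Ioi_of_ae_comp_exp_neg {p : ℝ → Prop} (hp : ∀ᵐ u : ℝ, p (exp (-u))) :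
    ∀ᵐ x ∂volume.restrict (Ioi (0 : ℝ)), p x := by
  have hnull : volume ((fun u : ℝ => exp (-u)) '' {u | ¬ p (exp (-u))}) = 0 :=
    addHaar_image_eq_zero_of_differentiableOn_of_addHaar_eq_zero _
      (by fun_prop) (ae_iff.1 hp)
  rw [ae_restrict_iff' measurableSet_Ioi, ae_iff]
  refine measure_mono_null (fun x hx => ?_) hnull
  obtain ⟨hx0, hpx⟩ : 0 < x ∧ ¬ p x := by simpa using hx
  exact ⟨-log x, by simpa [exp_log hx0] using hpx, by simp [exp_log hx0]⟩

lemma ae_mellinInv_mellin_eq [CompleteSpace E] {f : ℝ → E} {σ : ℝ} (hf : MellinConvergent f σ)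
    (hMf : Complex.VerticalIntegrable (mellin f) σ) :
    ∀ᵐ x ∂volume.restrict (Ioi (0 : ℝ)), mellinInv σ (mellin f) x = f x := by
  set g : ℝ → E := fun u => exp (-σ * u) • f (exp (-u)) with hg
  have hg_int : Integrable g := integrable_exp_smul_comp_exp_neg hf
  have hmellin (y : ℝ) : mellin f (σ + 2 * π * y * Complex.I) = 𝓕 g y := by
    rw [mellin_eq_fourier]
    simp [hg, mul_div_cancel_left₀ y two_pi_pos.ne']
  have hFg : Integrable (𝓕 g) := by
    refine (hMf.comp_mul_left' two_pi_pos.ne').congr (.of_forall fun y => ?_)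
    simp [← hmellin]
  refine ae_restrict_Ioi_of_ae_comp_exp_neg ?_
  filter_upwards [ae_eq_fourierInv_fourier hg_int hFg] with u hu
  rw [mellinInv_eq_fourierInv _ _ (exp_pos _), funext hmellin, log_exp, neg_neg, ← hu,
    ← Complex.ofReal_neg, ofReal_cpow_smul (exp_pos _).le, hg, smul_smul, ← exp_mul, ← exp_add]
  simp [mul_comm]

lemma rpow_smul_mellinInv (σ : ℝ) (F : ℂ → E) {x : ℝ} (hx : 0 < x) :
    x ^ σ • mellinInv σ F x = (1 / (2 * π)) •
      ∫ y : ℝ, Complex.exp ((-(log x * y) : ℝ) * Complex.I) • F (σ + y * Complex.I) := by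
  rw [mellinInv, smul_comm, ← integral_smul]
  congr 2 with y
  have hx0 : (x : ℂ) ≠ 0 := Complex.ofReal_ne_zero.2 hx.ne'
  have hphase : (x : ℂ) ^ (-(y * Complex.I)) = Complex.exp ((-(log x * y) : ℝ) * Complex.I) := by
    rw [Complex.cpow_def_of_ne_zero hx0, ← Complex.ofReal_log hx.le]
    push_cast
    ring_nf
  rw [neg_add, Complex.cpow_add _ _ hx0, mul_smul, ← Complex.ofReal_neg, ofReal_cpow_smul hx.le,
    smul_smul, ← rpow_add hx, add_neg_cancel, rpow_zero, one_smul, hphase]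

lemma norm_rpow_smul_mellinInv_le (σ : ℝ) (F : ℂ → E) {x : ℝ} (hx : 0 < x) :
    ‖x ^ σ • mellinInv σ F x‖ ≤ 1 / (2 * π) * ∫ y : ℝ, ‖F (σ + y * Complex.I)‖ := by
  rw [rpow_smul_mellinInv σ F hx, norm_smul, norm_of_nonneg (by positivity)]
  gcongr
  refine (norm_integral_le_integral_norm _).trans_eq ?_
  simp only [norm_smul, Complex.norm_exp_ofReal_mul_I, one_mul]

lemma norm_rpow_smul_mellinInv_mul_sub_le {σ : ℝ} {F : ℂ → E}
    (hF : Complex.VerticalIntegrable F σ)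
    (hF' : Integrable fun y : ℝ => |y| * ‖F (σ + y * Complex.I)‖)
    {r x : ℝ} (hr : 0 < r) (hx : 0 < x) :
    ‖(r * x) ^ σ • mellinInv σ F (r * x) - x ^ σ • mellinInv σ F x‖ ≤
      1 / (2 * π) * (∫ y : ℝ, |y| * ‖F (σ + y * Complex.I)‖) * |log r| := by
  have hint (c : ℝ) : Integrable fun y : ℝ =>
      Complex.exp ((-(c * y) : ℝ) * Complex.I) • F (σ + y * Complex.I) := by
    refine hF.norm.mono' ((by fun_prop : Continuous _).aestronglyMeasurable.smul
      hF.aestronglyMeasurable) (.of_forall fun y => ?_)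
    rw [norm_smul, Complex.norm_exp_ofReal_mul_I, one_mul]
  have hphase (y : ℝ) : ‖Complex.exp ((-(log (r * x) * y) : ℝ) * Complex.I) -
      Complex.exp ((-(log x * y) : ℝ) * Complex.I)‖ ≤ |y| * |log r| := by
    have hmul : Complex.exp ((-(log (r * x) * y) : ℝ) * Complex.I) =
        Complex.exp ((-(log x * y) : ℝ) * Complex.I) *
          Complex.exp (Complex.I * (-(log r * y) : ℝ)) := by
      rw [← Complex.exp_add, log_mul hr.ne' hx.ne']
      push_cast
      ring_nf
    rw [hmul, ← mul_sub_one, norm_mul, Complex.norm_exp_ofReal_mul_I, one_mul]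
    refine norm_exp_I_mul_ofReal_sub_one_le.trans_eq ?_
    rw [norm_neg, norm_mul, norm_eq_abs, norm_eq_abs, mul_comm]
  rw [rpow_smul_mellinInv σ F (mul_pos hr hx), rpow_smul_mellinInv σ F hx, ← smul_sub,
    ← integral_sub (hint _) (hint _), norm_smul, norm_of_nonneg (by positivity), mul_assoc,
    ← integral_mul_const]
  gcongr
  refine norm_integral_le_of_norm_le (hF'.mul_const _) (.of_forall fun y => ?_)
  rw [← sub_smul, norm_smul, mul_right_comm]
  gcongr
  exact hphase y

lemma ae_restrict_Ioi_comp_mul_left {p : ℝ → Prop}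
    (hp : ∀ᵐ x ∂volume.restrict (Ioi (0 : ℝ)), p x) {r : ℝ} (hr : 0 < r) :
    ∀ᵐ x ∂volume.restrict (Ioi (0 : ℝ)), p (r * x) := by
  rw [ae_restrict_iff' measurableSet_Ioi, ae_iff] at hp ⊢
  have hpre : {x | ¬ (x ∈ Ioi 0 → p (r * x))} = (r * ·) ⁻¹' {x | ¬ (x ∈ Ioi 0 → p x)} := by
    ext x
    simp [hr]
  rw [hpre, volume_preimage_mul_left hr.ne', hp, mul_zero]

lemma ae_norm_rpow_smul_le [CompleteSpace E] {f : ℝ → E} {σ : ℝ} (hf : MellinConvergent f σ)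
    (hMf : Complex.VerticalIntegrable (mellin f) σ) :
    ∀ᵐ x ∂volume.restrict (Ioi (0 : ℝ)),
      ‖x ^ σ • f x‖ ≤ 1 / (2 * π) * ∫ y : ℝ, ‖mellin f (σ + y * Complex.I)‖ := by
  filter_upwards [ae_mellinInv_mellin_eq hf hMf, ae_restrict_mem measurableSet_Ioi] with x hx hx0
  rw [← hx]
  exact norm_rpow_smul_mellinInv_le σ _ hx0

lemma ae_norm_rpow_smul_comp_mul_left_sub_le [CompleteSpace E] {f : ℝ → E} {σ : ℝ}
    (hf : MellinConvergent f σ) (hMf : Complex.VerticalIntegrable (mellin f) σ)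
    (hMf' : Integrable fun y : ℝ => |y| * ‖mellin f (σ + y * Complex.I)‖) {r : ℝ} (hr : 0 < r) :
    ∀ᵐ x ∂volume.restrict (Ioi (0 : ℝ)), ‖(r * x) ^ σ • f (r * x) - x ^ σ • f x‖ ≤
      1 / (2 * π) * (∫ y : ℝ, |y| * ‖mellin f (σ + y * Complex.I)‖) * |log r| := by
  have hinv := ae_mellinInv_mellin_eq hf hMf
  filter_upwards [hinv, ae_restrict_Ioi_comp_mul_left hinv hr, ae_restrict_mem measurableSet_Ioi]
    with x hx hrx hx0
  rw [← hx, ← hrx]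
  exact norm_rpow_smul_mellinInv_mul_sub_le hMf hMf' hr hx0

end MellinInversion

section AnalyticContinuation

lemma eqOn_re_gt_of_eq_ofReal {E : Type*} [NormedAddCommGroup E] [NormedSpace ℂ E]
    [CompleteSpace E] {a : ℝ} {f g : ℂ → E} (hf : DifferentiableOn ℂ f {s | a < s.re})
    (hg : DifferentiableOn ℂ g {s | a < s.re}) (hfg : ∀ x : ℝ, a < x → f x = g x) :
    EqOn f g {s | a < s.re} := by
  have hopen : IsOpen {s : ℂ | a < s.re} := isOpen_lt continuous_const Complex.continuous_re
  have htendsto : Filter.Tendsto ((↑) : ℝ → ℂ) (nhdsWithin (a + 1) {a + 1}ᶜ)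
      (nhdsWithin ((a + 1 : ℝ) : ℂ) {((a + 1 : ℝ) : ℂ)}ᶜ) :=
    Complex.continuous_ofReal.continuousWithinAt.tendsto_nhdsWithin fun x hx =>
      Complex.ofReal_injective.ne hx
  have heventually : ∀ᶠ x : ℝ in nhdsWithin (a + 1) {a + 1}ᶜ, f x = g x := by
    filter_upwards [nhdsWithin_le_nhds (Ioi_mem_nhds (lt_add_one a))] with x hx using hfg x hx
  exact (hf.analyticOnNhd hopen).eqOn_of_preconnected_of_frequently_eq (hg.analyticOnNhd hopen)
    (convex_halfSpace_re_gt a).isPreconnected (z₀ := ((a + 1 : ℝ) : ℂ)) (by simp)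
    (htendsto.frequently heventually.frequently)

lemma differentiableOn_mellin_of_nonneg {h : ℝ → ℝ} {a : ℝ} (h_nonneg : ∀ x ∈ Ioi 0, 0 ≤ h x)
    (h_int : ∀ σ, a < σ → IntegrableOn (fun x => x ^ (σ - 1) * h x) (Ioi 0)) :
    DifferentiableOn ℂ (mellin fun x => (h x : ℂ)) {s | a < s.re} := by
  set w : ℝ → ℝ := fun x => x ^ a * h x with hw
  set μ : Measure ℝ := (volume.restrict (Ioi 0)).withDensity fun x => ENNReal.ofReal (w x) with hμ
  have hw_nonneg : ∀ x ∈ Ioi (0 : ℝ), 0 ≤ w x := fun x hx =>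
    mul_nonneg (rpow_nonneg (le_of_lt hx) a) (h_nonneg x hx)
  have hw_meas : AEMeasurable (fun x => ENNReal.ofReal (w x)) (volume.restrict (Ioi 0)) := by
    simpa [hw] using (h_int (a + 1) (lt_add_one a)).aemeasurable.ennreal_ofReal
  have hw_top : ∀ᵐ x ∂volume.restrict (Ioi (0 : ℝ)), ENNReal.ofReal (w x) < ⊤ :=
    .of_forall fun x => ENNReal.ofReal_lt_top
  have hmellin (s : ℂ) : mellin (fun x => (h x : ℂ)) s =
      ProbabilityTheory.complexMGF log μ (s - (a + 1)) := by
    rw [mellin, ProbabilityTheory.complexMGF, hμ,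
      integral_withDensity_eq_integral_toReal_smul₀ hw_meas hw_top]
    refine setIntegral_congr_fun measurableSet_Ioi fun x (hx : 0 < x) => ?_
    have hx0 : (x : ℂ) ≠ 0 := Complex.ofReal_ne_zero.2 hx.ne'
    have hexp : Complex.exp ((s - (a + 1)) * log x) = (x : ℂ) ^ (s - 1) / (x : ℂ) ^ (a : ℂ) := by
      rw [← Complex.cpow_sub _ _ hx0, Complex.cpow_def_of_ne_zero hx0, Complex.ofReal_log hx.le]
      ring_nf
    have hxa : (x : ℂ) ^ (a : ℂ) ≠ 0 := by simp [Complex.cpow_eq_zero_iff, hx0]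
    rw [hexp, ENNReal.toReal_ofReal (hw_nonneg x hx), Complex.real_smul, smul_eq_mul, hw,
      Complex.ofReal_mul, Complex.ofReal_cpow hx.le]
    field_simp
  have hset : Ioi (-1 : ℝ) ⊆ ProbabilityTheory.integrableExpSet log μ := by
    intro c (hc : -1 < c)
    rw [ProbabilityTheory.integrableExpSet, mem_ofPred_eq, hμ,
      integrable_withDensity_iff_integrable_smul₀' hw_meas hw_top]
    refine (h_int (c + a + 1) (by linarith)).congr_fun (fun x (hx : 0 < x) => ?_) measurableSet_Ioi
    simp only
    rw [ENNReal.toReal_ofReal (hw_nonneg x hx), smul_eq_mul, hw, add_sub_cancel_right,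
      rpow_add hx, rpow_def_of_pos hx c]
    ring_nf
  refine DifferentiableOn.congr ?_ fun s _ => hmellin s
  refine ProbabilityTheory.differentiableOn_complexMGF.comp (by fun_prop)
    fun s (hs : a < s.re) => ?_
  refine interior_maximal hset isOpen_Ioi ?_
  simpa [add_comm] using hs

end AnalyticContinuation

/-- `h` is a version on `(0, ∞)` of the density `h_α` (the M-Wright function of order `α`) of the
random time in the subordination formula for time-fractional equations. Only its sign and its
moments of real order `γ > -1` are prescribed: they determine it almost everywhere. -/
structure IsWrightDensity (α : ℝ) (h : ℝ → ℝ) : Prop where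
  index_pos : 0 < α
  index_lt_one : α < 1
  nonneg : ∀ θ ∈ Ioi (0 : ℝ), 0 ≤ h θ
  moment : ∀ γ : ℝ, -1 < γ →
    ∫ θ in Ioi (0 : ℝ), θ ^ γ * h θ = Real.Gamma (1 + γ) / Real.Gamma (1 + α * γ)

namespace IsWrightDensity

variable {α : ℝ} {h : ℝ → ℝ}

lemma one_add_mul_pos (hh : IsWrightDensity α h) {γ : ℝ} (hγ : -1 < γ) : 0 < 1 + α * γ := by
  nlinarith [hh.index_pos, hh.index_lt_one]

lemma integrableOn_rpow_mul (hh : IsWrightDensity α h) {γ : ℝ} (hγ : -1 < γ) :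
    IntegrableOn (fun θ => θ ^ γ * h θ) (Ioi 0) := by
  refine not_imp_comm.1 integral_undef ?_
  rw [hh.moment γ hγ]
  exact (div_pos (Gamma_pos_of_pos (by linarith))
    (Gamma_pos_of_pos (hh.one_add_mul_pos hγ))).ne'

lemma integrableOn (hh : IsWrightDensity α h) : IntegrableOn h (Ioi 0) := by
  simpa using hh.integrableOn_rpow_mul (γ := 0) (by norm_num)

lemma integral_eq_one (hh : IsWrightDensity α h) : ∫ θ in Ioi (0 : ℝ), h θ = 1 := by
  simpa using hh.moment 0 (by norm_num)

lemma mellinConvergent (hh : IsWrightDensity α h) {σ : ℝ} (hσ : 0 < σ) :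
    MellinConvergent (fun θ => (h θ : ℂ)) σ := by
  have hint : IntegrableOn (fun θ => ((θ ^ (σ - 1) * h θ : ℝ) : ℂ)) (Ioi 0) :=
    (hh.integrableOn_rpow_mul (by linarith)).ofReal
  refine hint.congr_fun (fun θ (hθ : 0 < θ) => ?_) measurableSet_Ioi
  simp [Complex.ofReal_cpow hθ.le]

lemma differentiableOn_mellin (hh : IsWrightDensity α h) :
    DifferentiableOn ℂ (mellin fun θ => (h θ : ℂ)) {s | 0 < s.re} :=
  differentiableOn_mellin_of_nonneg hh.nonneg fun _ hσ =>
    hh.integrableOn_rpow_mul (by linarith)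

lemma mellin_eq (hh : IsWrightDensity α h) {s : ℂ} (hs : 0 < s.re) :
    mellin (fun θ => (h θ : ℂ)) s = Complex.Gamma s / Complex.Gamma (1 + α * (s - 1)) := by
  have hre {z : ℂ} (hz : 0 < z.re) : 0 < (1 + α * (z - 1)).re := by
    simpa using hh.one_add_mul_pos (γ := z.re - 1) (by linarith)
  have hdiff {z : ℂ} (hz : 0 < z.re) : DifferentiableAt ℂ Complex.Gamma z :=
    Complex.differentiableAt_Gamma _ fun m hm => by
      rw [hm, Complex.neg_re, Complex.natCast_re] at hz
      linarith [m.cast_nonneg (α := ℝ)]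
  refine eqOn_re_gt_of_eq_ofReal hh.differentiableOn_mellin
    (g := fun s => Complex.Gamma s / Complex.Gamma (1 + α * (s - 1)))
    (fun z hz => ?_) (fun x hx => ?_) hs
  · exact ((hdiff hz).div ((hdiff (hre hz)).comp z (by fun_prop))
      (Complex.Gamma_ne_zero_of_re_pos (hre hz))).differentiableWithinAt
  · have hint : mellin (fun θ => (h θ : ℂ)) x =
        ((∫ θ in Ioi (0 : ℝ), θ ^ (x - 1) * h θ : ℝ) : ℂ) := by
      rw [mellin, ← integral_complex_ofReal]
      refine setIntegral_congr_fun measurableSet_Ioi fun θ (hθ : 0 < θ) => ?_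
      simp [Complex.ofReal_cpow hθ.le]
    rw [hint, hh.moment _ (by linarith)]
    push_cast [← Complex.Gamma_ofReal]
    ring_nf

lemma norm_mellin_le (hh : IsWrightDensity α h) (n : ℕ) (y : ℝ) :
    ‖mellin (fun θ => (h θ : ℂ)) ((n + 1 : ℝ) + y * Complex.I)‖ ≤
      n.factorial / (√α * Real.Gamma (1 + α * n)) *
        ((1 + |y|) ^ n * exp (-((1 - α) * π / 2 * |y|))) := by
  have hre : 0 < (((n + 1 : ℝ) : ℂ) + y * Complex.I).re := by
    suffices 0 < (n : ℝ) + 1 by simpa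
    positivity
  rw [hh.mellin_eq hre]
  convert norm_Gamma_div_Gamma_le hh.index_pos hh.index_lt_one.le n y using 4
  · push_cast
    ring_nf
  · push_cast
    ring_nf

lemma continuous_mellin_vertical (hh : IsWrightDensity α h) {σ : ℝ} (hσ : 0 < σ) :
    Continuous fun y : ℝ => mellin (fun θ => (h θ : ℂ)) (σ + y * Complex.I) :=
  hh.differentiableOn_mellin.continuousOn.comp_continuous (by fun_prop) fun y => by simpa

lemma integrable_one_add_abs_mul_norm_mellin (hh : IsWrightDensity α h) (n : ℕ) :
    Integrable fun y : ℝ =>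
      (1 + |y|) * ‖mellin (fun θ => (h θ : ℂ)) ((n + 1 : ℝ) + y * Complex.I)‖ := by
  have hrate : 0 < (1 - α) * π / 2 := by
    have := sub_pos.2 hh.index_lt_one
    positivity
  have hcont := hh.continuous_mellin_vertical (σ := n + 1) (by positivity)
  refine ((integrable_one_add_abs_pow_mul_exp_neg hrate (n + 1)).const_mul
    (n.factorial / (√α * Real.Gamma (1 + α * n)))).mono'
    (by fun_prop) (.of_forall fun y => ?_)
  rw [norm_of_nonneg (by positivity)]
  calc _ ≤ (1 + |y|) * _ := mul_le_mul_of_nonneg_left (hh.norm_mellin_le n y) (by positivity)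
    _ = _ := by ring

lemma verticalIntegrable_mellin (hh : IsWrightDensity α h) (n : ℕ) :
    Complex.VerticalIntegrable (mellin fun θ => (h θ : ℂ)) (n + 1 : ℝ) := by
  refine (hh.integrable_one_add_abs_mul_norm_mellin n).mono'
    (hh.continuous_mellin_vertical (by positivity)).aestronglyMeasurable (.of_forall fun y => ?_)
  exact le_mul_of_one_le_left (norm_nonneg _) (by linarith [abs_nonneg y])

lemma integrable_abs_mul_norm_mellin (hh : IsWrightDensity α h) (n : ℕ) :
    Integrable fun y : ℝ =>
      |y| * ‖mellin (fun θ => (h θ : ℂ)) ((n + 1 : ℝ) + y * Complex.I)‖ := by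
  have hcont := hh.continuous_mellin_vertical (σ := n + 1) (by positivity)
  refine (hh.integrable_one_add_abs_mul_norm_mellin n).mono' (by fun_prop) (.of_forall fun y => ?_)
  rw [norm_of_nonneg (by positivity)]
  gcongr
  linarith

lemma exists_rpow_mul_le (hh : IsWrightDensity α h) (n : ℕ) :
    ∃ B : ℝ, ∀ᵐ θ ∂volume.restrict (Ioi (0 : ℝ)), θ ^ (n + 1 : ℝ) * h θ ≤ B := by
  refine ⟨1 / (2 * π) * ∫ y : ℝ, ‖mellin (fun θ => (h θ : ℂ)) ((n + 1 : ℝ) + y * Complex.I)‖, ?_⟩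
  filter_upwards [ae_norm_rpow_smul_le (hh.mellinConvergent (by positivity))
    (hh.verticalIntegrable_mellin n)] with θ hθ
  refine (le_abs_self _).trans ?_
  rwa [Complex.real_smul, ← Complex.ofReal_mul, Complex.norm_real] at hθ

lemma exists_abs_rpow_mul_comp_mul_left_sub_le (hh : IsWrightDensity α h) (n : ℕ) :
    ∃ D : ℝ, ∀ r, 0 < r → ∀ᵐ θ ∂volume.restrict (Ioi (0 : ℝ)),
      |(r * θ) ^ (n + 1 : ℝ) * h (r * θ) - θ ^ (n + 1 : ℝ) * h θ| ≤ D * |log r| := by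
  refine ⟨1 / (2 * π) *
      ∫ y : ℝ, |y| * ‖mellin (fun θ => (h θ : ℂ)) ((n + 1 : ℝ) + y * Complex.I)‖,
    fun r hr => ?_⟩
  filter_upwards [ae_norm_rpow_smul_comp_mul_left_sub_le (hh.mellinConvergent (by positivity))
    (hh.verticalIntegrable_mellin n) (hh.integrable_abs_mul_norm_mellin n) hr] with θ hθ
  rwa [Complex.real_smul, Complex.real_smul, ← Complex.ofReal_mul, ← Complex.ofReal_mul,
    ← Complex.ofReal_sub, Complex.norm_real] at hθ

end IsWrightDensity

lemma rpow_mul_abs_mul_sub_le {a b r θ σ B D : ℝ} (hr : 1 ≤ r) (hθ : 0 ≤ θ) (hb : 0 ≤ b)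
    (hσ : 1 ≤ σ) (hB : θ ^ σ * b ≤ B)
    (hD : |(r * θ) ^ σ * a - θ ^ σ * b| ≤ D * log r) :
    θ ^ σ * |r * a - b| ≤ (D + (σ - 1) * B) * log r := by
  have hr0 : 0 < r := by linarith
  set p : ℝ := r ^ (σ - 1) with hp
  have hp1 : 1 ≤ p := one_le_rpow hr (by linarith)
  have hp_inv : p⁻¹ ≤ 1 := inv_le_one_of_one_le₀ hp1
  have hp_log : 1 - p⁻¹ ≤ (σ - 1) * log r := by
    rw [← log_rpow hr0]
    exact one_sub_inv_le_log_of_pos (by positivity)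
  have hθσ : 0 ≤ θ ^ σ := rpow_nonneg hθ σ
  have hsplit : θ ^ σ * (r * a - b) =
      p⁻¹ * ((r * θ) ^ σ * a - θ ^ σ * b) - (1 - p⁻¹) * (θ ^ σ * b) := by
    have hrσ : r ^ σ = p * r := by
      rw [hp, ← rpow_add_one hr0.ne', sub_add_cancel]
    rw [mul_rpow hr0.le hθ, hrσ]
    field_simp
    ring
  calc θ ^ σ * |r * a - b|
      = |p⁻¹ * ((r * θ) ^ σ * a - θ ^ σ * b) - (1 - p⁻¹) * (θ ^ σ * b)| := by
        rw [← hsplit, abs_mul, abs_of_nonneg hθσ]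
    _ ≤ |p⁻¹ * ((r * θ) ^ σ * a - θ ^ σ * b)| + |(1 - p⁻¹) * (θ ^ σ * b)| := abs_sub _ _
    _ = p⁻¹ * |(r * θ) ^ σ * a - θ ^ σ * b| + (1 - p⁻¹) * (θ ^ σ * b) := by
        rw [abs_mul, abs_mul, abs_of_nonneg (by positivity : 0 ≤ p⁻¹),
          abs_of_nonneg (sub_nonneg.2 hp_inv), abs_of_nonneg (mul_nonneg hθσ hb)]
    _ ≤ 1 * (D * log r) + (σ - 1) * log r * B := by
        gcongr
        exact (sub_nonneg.2 hp_inv).trans hp_log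
    _ = (D + (σ - 1) * B) * log r := by ring

lemma IsWrightDensity.exists_rpow_mul_abs_dilation_sub_le {α : ℝ} {h : ℝ → ℝ}
    (hh : IsWrightDensity α h) (n : ℕ) :
    ∃ D : ℝ, ∀ r, 1 ≤ r → ∀ᵐ θ ∂volume.restrict (Ioi (0 : ℝ)),
      θ ^ (n + 1 : ℝ) * |r * h (r * θ) - h θ| ≤ D * log r := by
  obtain ⟨B, hB⟩ := hh.exists_rpow_mul_le n
  obtain ⟨D, hD⟩ := hh.exists_abs_rpow_mul_comp_mul_left_sub_le n
  refine ⟨D + (n + 1 - 1) * B, fun r hr => ?_⟩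
  filter_upwards [hB, hD r (by linarith), ae_restrict_mem measurableSet_Ioi] with θ hθB hθD hθ
  rw [abs_of_nonneg (log_nonneg hr)] at hθD
  exact rpow_mul_abs_mul_sub_le hr (le_of_lt hθ) (hh.nonneg θ hθ) (by simp) hθB hθD

lemma integrableOn_Ioc_rpow_mul_abs {k : ℝ → ℝ} {A q : ℝ} (hq : 0 < q)
    (hk : AEStronglyMeasurable k (volume.restrict (Ioc 0 1)))
    (hkA : ∀ᵐ θ ∂volume.restrict (Ioc (0 : ℝ) 1), θ * |k θ| ≤ A) :
    IntegrableOn (fun θ => θ ^ q * |k θ|) (Ioc 0 1) ∧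
      ∫ θ in Ioc (0 : ℝ) 1, θ ^ q * |k θ| ≤ A / q := by
  have hle : ∀ᵐ θ ∂volume.restrict (Ioc (0 : ℝ) 1), ‖θ ^ q * |k θ|‖ ≤ A * θ ^ (q - 1) := by
    filter_upwards [hkA, ae_restrict_mem measurableSet_Ioc] with θ hθk ⟨hθ, _⟩
    rw [norm_of_nonneg (by positivity)]
    calc θ ^ q * |k θ| = θ * |k θ| * θ ^ (q - 1) := by
          rw [rpow_sub_one hθ.ne']
          field_simp
      _ ≤ A * θ ^ (q - 1) := by gcongr
  have hdom : IntegrableOn (fun θ : ℝ => A * θ ^ (q - 1)) (Ioc 0 1) :=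
    ((intervalIntegrable_iff_integrableOn_Ioc_of_le zero_le_one).1
      (intervalIntegral.intervalIntegrable_rpow' (by linarith))).const_mul A
  have hint := hdom.mono' ((by fun_prop : Measurable fun θ : ℝ => θ ^ q).aestronglyMeasurable.mul
    hk.norm) hle
  refine ⟨hint, ?_⟩
  calc ∫ θ in Ioc (0 : ℝ) 1, θ ^ q * |k θ| ≤ ∫ θ in Ioc (0 : ℝ) 1, A * θ ^ (q - 1) :=
        integral_mono_ae hint hdom (hle.mono fun _ => (le_abs_self _).trans)
    _ = A / q := by
        rw [integral_const_mul, ← intervalIntegral.integral_of_le zero_le_one,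
          integral_rpow (by left; linarith)]
        simp [hq.ne', div_eq_mul_inv]

lemma integrableOn_Ioi_rpow_mul_abs {k : ℝ → ℝ} {A q p : ℝ} (hqp : q < p)
    (hk : AEStronglyMeasurable k (volume.restrict (Ioi 1)))
    (hkA : ∀ᵐ θ ∂volume.restrict (Ioi (1 : ℝ)), θ ^ (p + 1) * |k θ| ≤ A) :
    IntegrableOn (fun θ => θ ^ q * |k θ|) (Ioi 1) ∧
      ∫ θ in Ioi (1 : ℝ), θ ^ q * |k θ| ≤ A / (p - q) := by
  have hle : ∀ᵐ θ ∂volume.restrict (Ioi (1 : ℝ)), ‖θ ^ q * |k θ|‖ ≤ A * θ ^ (q - p - 1) := by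
    filter_upwards [hkA, ae_restrict_mem measurableSet_Ioi] with θ hθk hθ
    have hθ0 : 0 < θ := zero_lt_one.trans hθ
    rw [norm_of_nonneg (by positivity)]
    calc θ ^ q * |k θ| = θ ^ (p + 1) * |k θ| * θ ^ (q - p - 1) := by
          rw [mul_right_comm, ← rpow_add hθ0]
          ring_nf
      _ ≤ A * θ ^ (q - p - 1) := by gcongr
  have hdom : IntegrableOn (fun θ : ℝ => A * θ ^ (q - p - 1)) (Ioi 1) :=
    (integrableOn_Ioi_rpow_of_lt (by linarith) one_pos).const_mul A
  have hint := hdom.mono' ((by fun_prop : Measurable fun θ : ℝ => θ ^ q).aestronglyMeasurable.mul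
    hk.norm) hle
  refine ⟨hint, ?_⟩
  calc ∫ θ in Ioi (1 : ℝ), θ ^ q * |k θ| ≤ ∫ θ in Ioi (1 : ℝ), A * θ ^ (q - p - 1) :=
        integral_mono_ae hint hdom (hle.mono fun _ => (le_abs_self _).trans)
    _ = A / (p - q) := by
        rw [integral_const_mul, integral_Ioi_rpow_of_lt (by linarith) one_pos, one_rpow,
          sub_add_cancel, ← neg_sub p q, neg_div_neg_eq, mul_one_div]

lemma integrableOn_rpow_mul_abs {k : ℝ → ℝ} {A₀ A₁ q p : ℝ} (hq : 0 < q) (hqp : q < p)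
    (hk : AEStronglyMeasurable k (volume.restrict (Ioi 0)))
    (hk₀ : ∀ᵐ θ ∂volume.restrict (Ioi (0 : ℝ)), θ * |k θ| ≤ A₀)
    (hk₁ : ∀ᵐ θ ∂volume.restrict (Ioi (0 : ℝ)), θ ^ (p + 1) * |k θ| ≤ A₁) :
    IntegrableOn (fun θ => θ ^ q * |k θ|) (Ioi 0) ∧
      ∫ θ in Ioi (0 : ℝ), θ ^ q * |k θ| ≤ A₀ / q + A₁ / (p - q) := by
  obtain ⟨hint₀, hle₀⟩ := integrableOn_Ioc_rpow_mul_abs hq (hk.mono_set Ioc_subset_Ioi_self)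
    (ae_restrict_of_ae_restrict_of_subset Ioc_subset_Ioi_self hk₀)
  obtain ⟨hint₁, hle₁⟩ := integrableOn_Ioi_rpow_mul_abs hqp
    (hk.mono_set (Ioi_subset_Ioi zero_le_one))
    (ae_restrict_of_ae_restrict_of_subset (Ioi_subset_Ioi zero_le_one) hk₁)
  rw [← Ioc_union_Ioi_eq_Ioi (zero_le_one' ℝ)]
  refine ⟨IntegrableOn.union hint₀ hint₁, ?_⟩
  rw [setIntegral_union (Ioc_disjoint_Ioi le_rfl) measurableSet_Ioi hint₀ hint₁]
  exact add_le_add hle₀ hle₁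

lemma aestronglyMeasurable_restrict_Ioi_comp_mul_left {E : Type*} [TopologicalSpace E]
    {f : ℝ → E} (hf : AEStronglyMeasurable f (volume.restrict (Ioi 0))) {c : ℝ} (hc : 0 < c) :
    AEStronglyMeasurable (fun x => f (c * x)) (volume.restrict (Ioi 0)) :=
  ⟨fun x => hf.mk f (c * x), hf.stronglyMeasurable_mk.comp_measurable (measurable_const_mul c),
    ae_restrict_Ioi_comp_mul_left hf.ae_eq_mk hc⟩

namespace IsWrightDensity

variable {α : ℝ} {h : ℝ → ℝ}

lemma aestronglyMeasurable_dilation_sub (hh : IsWrightDensity α h) {r : ℝ} (hr : 0 < r) :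
    AEStronglyMeasurable (fun θ => r * h (r * θ) - h θ) (volume.restrict (Ioi 0)) :=
  have hmeas := hh.integrableOn.aestronglyMeasurable
  ((aestronglyMeasurable_restrict_Ioi_comp_mul_left hmeas hr).const_mul r).sub hmeas

lemma exists_integral_rpow_mul_abs_dilation_sub_le (hh : IsWrightDensity α h) {q : ℝ} (hq : 0 < q) :
    ∃ D : ℝ, ∀ r, 1 ≤ r →
      IntegrableOn (fun θ => θ ^ q * |r * h (r * θ) - h θ|) (Ioi 0) ∧
        ∫ θ in Ioi (0 : ℝ), θ ^ q * |r * h (r * θ) - h θ| ≤ D * log r := by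
  obtain ⟨n, hn⟩ := exists_nat_gt q
  obtain ⟨D₀, hD₀⟩ := hh.exists_rpow_mul_abs_dilation_sub_le 0
  obtain ⟨D₁, hD₁⟩ := hh.exists_rpow_mul_abs_dilation_sub_le n
  refine ⟨D₀ / q + D₁ / (n - q), fun r hr => ?_⟩
  rw [add_mul, div_mul_eq_mul_div, div_mul_eq_mul_div]
  exact integrableOn_rpow_mul_abs hq hn (hh.aestronglyMeasurable_dilation_sub (by linarith))
    (by simpa using hD₀ r hr) (hD₁ r hr)

end IsWrightDensity

section Subordination

variable {X : Type*} [NormedAddCommGroup X] [NormedSpace ℝ X]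

/-- The orbit `f` averaged against the density `h` in the self-similar time scale `t ^ α * θ`.
With `h = h_α` and `f τ = T(τ) u₀` this is the solution operator term `S₀(t)`. -/
noncomputable def subordinated (α : ℝ) (h : ℝ → ℝ) (f : ℝ → X) (t : ℝ) : X :=
  ∫ θ in Ioi (0 : ℝ), h θ • f (t ^ α * θ)

lemma integrableOn_smul_comp_mul_left_sub {k : ℝ → ℝ} {f : ℝ → X} {x : X} {C q c : ℝ}
    (hk : AEStronglyMeasurable k (volume.restrict (Ioi 0)))
    (hkq : IntegrableOn (fun θ => θ ^ q * |k θ|) (Ioi 0))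
    (hf : AEStronglyMeasurable f (volume.restrict (Ioi 0)))
    (hfx : ∀ τ, 0 < τ → ‖f τ - x‖ ≤ C * τ ^ q) (hc : 0 < c) :
    IntegrableOn (fun θ => k θ • (f (c * θ) - x)) (Ioi 0) ∧
      ‖∫ θ in Ioi (0 : ℝ), k θ • (f (c * θ) - x)‖ ≤
        C * c ^ q * ∫ θ in Ioi (0 : ℝ), θ ^ q * |k θ| := by
  have hle : ∀ᵐ θ ∂volume.restrict (Ioi (0 : ℝ)),
      ‖k θ • (f (c * θ) - x)‖ ≤ C * c ^ q * (θ ^ q * |k θ|) := by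
    filter_upwards [ae_restrict_mem measurableSet_Ioi] with θ (hθ : 0 < θ)
    calc ‖k θ • (f (c * θ) - x)‖ = |k θ| * ‖f (c * θ) - x‖ := by
          rw [norm_smul, norm_eq_abs]
      _ ≤ |k θ| * (C * (c * θ) ^ q) := by
          gcongr
          exact hfx _ (mul_pos hc hθ)
      _ = C * c ^ q * (θ ^ q * |k θ|) := by
          rw [mul_rpow hc.le hθ.le]
          ring
  have hdom := hkq.const_mul (C * c ^ q)
  refine ⟨hdom.mono' (hk.smul ((aestronglyMeasurable_restrict_Ioi_comp_mul_left hf hc).sub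
    aestronglyMeasurable_const)) hle, ?_⟩
  rw [← integral_const_mul]
  exact norm_integral_le_of_norm_le hdom hle

variable {α : ℝ} {h : ℝ → ℝ} {f : ℝ → X} {C q : ℝ}

namespace IsWrightDensity

lemma rpow_mul_abs_eqOn (hh : IsWrightDensity α h) (q : ℝ) :
    EqOn (fun θ => θ ^ q * |h θ|) (fun θ => θ ^ q * h θ) (Ioi 0) := fun θ hθ => by
  simp only [abs_of_nonneg (hh.nonneg θ hθ)]

lemma integrableOn_smul_sub (hh : IsWrightDensity α h) (hq : -1 < q)
    (hf : AEStronglyMeasurable f (volume.restrict (Ioi 0)))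
    (hf0 : ∀ τ, 0 < τ → ‖f τ - f 0‖ ≤ C * τ ^ q) {c : ℝ} (hc : 0 < c) :
    IntegrableOn (fun θ => h θ • (f (c * θ) - f 0)) (Ioi 0) ∧
      ‖∫ θ in Ioi (0 : ℝ), h θ • (f (c * θ) - f 0)‖ ≤
        C * c ^ q * (Real.Gamma (1 + q) / Real.Gamma (1 + α * q)) := by
  have habs := hh.rpow_mul_abs_eqOn q
  rw [← hh.moment q hq, ← setIntegral_congr_fun measurableSet_Ioi habs]
  exact integrableOn_smul_comp_mul_left_sub hh.integrableOn.aestronglyMeasurable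
    ((hh.integrableOn_rpow_mul hq).congr_fun habs.symm measurableSet_Ioi) hf hf0 hc

variable [CompleteSpace X]

lemma integral_smul_const_eq (hh : IsWrightDensity α h) (x : X) :
    ∫ θ in Ioi (0 : ℝ), h θ • x = x := by
  rw [integral_smul_const, hh.integral_eq_one, one_smul]

lemma subordinated_zero (hh : IsWrightDensity α h) (f : ℝ → X) : subordinated α h f 0 = f 0 := by
  simpa [subordinated, zero_rpow hh.index_pos.ne'] using hh.integral_smul_const_eq (f 0)

lemma subordinated_sub_eq (hh : IsWrightDensity α h) (hq : -1 < q)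
    (hf : AEStronglyMeasurable f (volume.restrict (Ioi 0)))
    (hf0 : ∀ τ, 0 < τ → ‖f τ - f 0‖ ≤ C * τ ^ q) {t : ℝ} (ht : 0 < t) :
    subordinated α h f t - f 0 = ∫ θ in Ioi (0 : ℝ), h θ • (f (t ^ α * θ) - f 0) := by
  have hconst : IntegrableOn (fun θ => h θ • f 0) (Ioi 0) := hh.integrableOn.smul_const (f 0)
  have hint := (hh.integrableOn_smul_sub hq hf hf0 (rpow_pos_of_pos ht α)).1
  rw [sub_eq_iff_eq_add]
  calc subordinated α h f t
      = ∫ θ in Ioi (0 : ℝ), (h θ • (f (t ^ α * θ) - f 0) + h θ • f 0) := by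
        simp only [subordinated, smul_sub, sub_add_cancel]
    _ = (∫ θ in Ioi (0 : ℝ), h θ • (f (t ^ α * θ) - f 0)) + f 0 := by
        rw [integral_add hint hconst, hh.integral_smul_const_eq]

lemma norm_subordinated_sub_le (hh : IsWrightDensity α h) (hq : 0 < q)
    (hf : AEStronglyMeasurable f (volume.restrict (Ioi 0)))
    (hf0 : ∀ τ, 0 < τ → ‖f τ - f 0‖ ≤ C * τ ^ q) {t : ℝ} (ht : 0 ≤ t) :
    ‖subordinated α h f t - f 0‖ ≤
      C * (Real.Gamma (1 + q) / Real.Gamma (1 + α * q)) * t ^ (α * q) := by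
  rcases ht.eq_or_lt with rfl | ht
  · simp [hh.subordinated_zero, zero_rpow (mul_pos hh.index_pos hq).ne']
  · have hq' : -1 < q := by linarith
    rw [hh.subordinated_sub_eq hq' hf hf0 ht, rpow_mul ht.le, mul_right_comm]
    exact (hh.integrableOn_smul_sub hq' hf hf0 (rpow_pos_of_pos ht α)).2

lemma subordinated_sub_subordinated_eq (hh : IsWrightDensity α h) (hq : -1 < q)
    (hf : AEStronglyMeasurable f (volume.restrict (Ioi 0)))
    (hf0 : ∀ τ, 0 < τ → ‖f τ - f 0‖ ≤ C * τ ^ q) {s t r : ℝ} (hs : 0 < s) (ht : 0 < t)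
    (hr : s ^ α * r = t ^ α) :
    subordinated α h f s - subordinated α h f t =
      ∫ θ in Ioi (0 : ℝ), (r * h (r * θ) - h θ) • (f (t ^ α * θ) - f 0) := by
  have hr0 : 0 < r := pos_of_mul_pos_right (hr ▸ rpow_pos_of_pos ht α) (rpow_nonneg hs.le α)
  set F : ℝ → X := fun θ => h θ • (f (s ^ α * θ) - f 0) with hF
  have hFr (θ : ℝ) : r • F (r * θ) = (r * h (r * θ)) • (f (t ^ α * θ) - f 0) := by
    rw [hF, smul_smul, ← mul_assoc, hr]
  have hFint : IntegrableOn F (Ioi 0) :=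
    (hh.integrableOn_smul_sub hq hf hf0 (rpow_pos_of_pos hs α)).1
  have hFrint : IntegrableOn (fun θ => r • F (r * θ)) (Ioi 0) :=
    Integrable.smul r ((integrableOn_Ioi_comp_mul_left_iff F 0 hr0).2 (by simpa using hFint))
  simp only [sub_smul _ (h _), ← hFr]
  rw [integral_sub hFrint (hh.integrableOn_smul_sub hq hf hf0 (rpow_pos_of_pos ht α)).1,
    integral_smul, integral_comp_mul_left_Ioi F 0 hr0, mul_zero, smul_inv_smul₀ hr0.ne', hF,
    ← hh.subordinated_sub_eq hq hf hf0 hs, ← hh.subordinated_sub_eq hq hf hf0 ht,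
    sub_sub_sub_cancel_right]

lemma exists_norm_subordinated_sub_le_log (hh : IsWrightDensity α h) (hq : 0 < q)
    (hf : AEStronglyMeasurable f (volume.restrict (Ioi 0)))
    (hf0 : ∀ τ, 0 < τ → ‖f τ - f 0‖ ≤ C * τ ^ q) :
    ∃ L : ℝ, ∀ s t, 0 < s → s ≤ t →
      ‖subordinated α h f t - subordinated α h f s‖ ≤ L * t ^ (α * q) * log (t / s) := by
  have hC : 0 ≤ C := by simpa using (norm_nonneg _).trans (hf0 1 one_pos)
  obtain ⟨D, hD⟩ := hh.exists_integral_rpow_mul_abs_dilation_sub_le hq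
  refine ⟨C * D * α, fun s t hs hst => ?_⟩
  have ht : 0 < t := hs.trans_le hst
  set r : ℝ := (t / s) ^ α with hr
  have hr1 : 1 ≤ r := one_le_rpow ((one_le_div hs).2 hst) hh.index_pos.le
  have hsr : s ^ α * r = t ^ α := by
    rw [hr, ← mul_rpow hs.le (by positivity), mul_div_cancel₀ t hs.ne']
  obtain ⟨hDint, hDle⟩ := hD r hr1
  have hmeas := hh.aestronglyMeasurable_dilation_sub (r := r) (by positivity)
  rw [norm_sub_rev, hh.subordinated_sub_subordinated_eq (by linarith) hf hf0 hs ht hsr]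
  calc ‖∫ θ in Ioi (0 : ℝ), (r * h (r * θ) - h θ) • (f (t ^ α * θ) - f 0)‖
      ≤ C * (t ^ α) ^ q * ∫ θ in Ioi (0 : ℝ), θ ^ q * |r * h (r * θ) - h θ| :=
        (integrableOn_smul_comp_mul_left_sub hmeas hDint hf hf0 (by positivity)).2
    _ ≤ C * (t ^ α) ^ q * (D * log r) := by gcongr
    _ = C * D * α * t ^ (α * q) * log (t / s) := by
        rw [hr, log_rpow (by positivity), rpow_mul ht.le]
        ring

end IsWrightDensity

end Subordination

section Holder

variable {E : Type*} [SeminormedAddCommGroup E]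

lemma log_div_le_rpow {s t β : ℝ} (hs : 0 < s) (hst : s ≤ t) (hts : t ≤ 2 * s) (hβ0 : 0 ≤ β)
    (hβ1 : β ≤ 1) : log (t / s) ≤ ((t - s) / s) ^ β := by
  have h0 : 0 ≤ (t - s) / s := div_nonneg (sub_nonneg.2 hst) hs.le
  have h1 : (t - s) / s ≤ 1 := (div_le_one hs).2 (by linarith)
  calc log (t / s) ≤ t / s - 1 := log_le_sub_one_of_pos (div_pos (hs.trans_le hst) hs)
    _ = ((t - s) / s) ^ (1 : ℝ) := by rw [rpow_one, sub_div, div_self hs.ne']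
    _ ≤ ((t - s) / s) ^ β := rpow_le_rpow_of_exponent_ge' h0 h1 hβ0 hβ1

lemma norm_sub_le_of_two_mul_lt {S : ℝ → E} {x : E} {K r β : ℝ} (hr : 0 ≤ r) (hβ : 0 ≤ β)
    (hSx : ∀ t, 0 ≤ t → ‖S t - x‖ ≤ K * t ^ r) {s t : ℝ} (hs : 0 ≤ s) (hst : 2 * s < t) :
    ‖S t - S s‖ ≤ 2 ^ β * (2 * K) * t ^ (r - β) * (t - s) ^ β := by
  have ht : 0 < t := by linarith
  have hK : 0 ≤ K := by simpa using (norm_nonneg _).trans (hSx 1 zero_le_one)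
  have htβ : t ^ β ≤ 2 ^ β * (t - s) ^ β := by
    rw [← mul_rpow zero_le_two (by linarith)]
    gcongr
    linarith
  calc ‖S t - S s‖ ≤ ‖S t - x‖ + ‖S s - x‖ := by
        simpa using norm_sub_le (S t - x) (S s - x)
    _ ≤ K * t ^ r + K * t ^ r := by
        refine add_le_add (hSx t ht.le) ((hSx s hs).trans ?_)
        gcongr
        linarith
    _ = 2 * K * t ^ (r - β) * t ^ β := by
        rw [mul_assoc, ← rpow_add ht, sub_add_cancel]
        ring
    _ ≤ 2 * K * t ^ (r - β) * (2 ^ β * (t - s) ^ β) := by gcongr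
    _ = 2 ^ β * (2 * K) * t ^ (r - β) * (t - s) ^ β := by ring

lemma mul_rpow_mul_log_div_le {L r s t β : ℝ} (hL : 0 ≤ L) (hs : 0 < s) (hst : s ≤ t)
    (hts : t ≤ 2 * s) (hβ0 : 0 ≤ β) (hβ1 : β ≤ 1) :
    L * t ^ r * log (t / s) ≤ 2 ^ β * L * t ^ (r - β) * (t - s) ^ β := by
  have ht : 0 < t := hs.trans_le hst
  have htβ : t ^ β ≤ 2 ^ β * s ^ β := by
    rw [← mul_rpow zero_le_two hs.le]
    gcongr
  have hlog0 : 0 ≤ log (t / s) := log_nonneg ((one_le_div hs).2 hst)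
  calc L * t ^ r * log (t / s) = L * (t ^ (r - β) * t ^ β) * log (t / s) := by
        rw [← rpow_add ht, sub_add_cancel]
    _ ≤ L * (t ^ (r - β) * (2 ^ β * s ^ β)) * ((t - s) / s) ^ β := by
        gcongr
        exact log_div_le_rpow hs hst hts hβ0 hβ1
    _ = 2 ^ β * L * t ^ (r - β) * (t - s) ^ β := by
        rw [div_rpow (sub_nonneg.2 hst) hs.le]
        field_simp

lemma exists_holder_Icc_of_log {S : ℝ → E} {x : E} {K L r β : ℝ} (hβ0 : 0 < β) (hβ1 : β ≤ 1)
    (hβr : β ≤ r) (hSx : ∀ t, 0 ≤ t → ‖S t - x‖ ≤ K * t ^ r)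
    (hlog : ∀ s t, 0 < s → s ≤ t → ‖S t - S s‖ ≤ L * t ^ r * log (t / s)) (T : ℝ) :
    ∃ Ch : ℝ, ∀ s ∈ Icc 0 T, ∀ t ∈ Icc 0 T, ‖S t - S s‖ ≤ Ch * |t - s| ^ β := by
  have hK : 0 ≤ K := by simpa using (norm_nonneg _).trans (hSx 1 zero_le_one)
  have hL : 0 ≤ L := by
    have := (norm_nonneg _).trans (hlog 1 (exp 1) one_pos (one_le_exp zero_le_one))
    exact nonneg_of_mul_nonneg_left (by simpa using this) (by positivity : 0 < exp 1 ^ r)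
  set Ch : ℝ := 2 ^ β * (2 * K + L) * T ^ (r - β) with hCh
  have hlt : ∀ s ∈ Icc 0 T, ∀ t ∈ Icc 0 T, s < t → ‖S t - S s‖ ≤ Ch * |t - s| ^ β := by
    rintro s ⟨hs, -⟩ t ⟨ht, htT⟩ hst
    have hts0 := sub_nonneg.2 hst.le
    have := sub_nonneg.2 hβr
    rw [abs_of_nonneg hts0, hCh]
    rcases lt_or_ge (2 * s) t with hfar | hnear
    · refine (norm_sub_le_of_two_mul_lt (hβ0.le.trans hβr) hβ0.le hSx hs hfar).trans ?_
      gcongr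
      linarith
    · have hs0 : 0 < s := by linarith
      refine (hlog s t hs0 hst.le).trans
        ((mul_rpow_mul_log_div_le hL hs0 hst.le hnear hβ0.le hβ1).trans ?_)
      gcongr
      linarith
  refine ⟨Ch, fun s hs t ht => ?_⟩
  rcases lt_trichotomy s t with hst | rfl | hts
  · exact hlt s hs t ht hst
  · simp [zero_rpow hβ0.ne']
  · rw [norm_sub_rev, abs_sub_comm]
    exact hlt t ht s hs hts

lemma continuousOn_Ioi_of_norm_sub_le {f : ℝ → E} {K η : ℝ} (hη : 0 < η)
    (hf : ∀ s t, 0 < s → s < t → ‖f t - f s‖ ≤ K * (t - s) ^ η * s ^ (-η)) :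
    ContinuousOn f (Ioi 0) := by
  refine continuousOn_of_forall_continuousAt fun x (hx : 0 < x) => ?_
  have hK : 0 ≤ K := by
    simpa [show (2 : ℝ) - 1 = 1 by norm_num] using
      (norm_nonneg _).trans (hf 1 2 one_pos one_lt_two)
  have hlt {s t : ℝ} (hs : x / 2 < s) (hst : s < t) :
      ‖f t - f s‖ ≤ K * (t - s) ^ η * (x / 2) ^ (-η) := by
    refine (hf s t (by linarith) hst).trans ?_
    have := sub_nonneg.2 hst.le
    gcongr ?_ * ?_
    exact rpow_le_rpow_of_nonpos (by linarith) hs.le (by linarith)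
  have hlim : Filter.Tendsto (fun y => K * |y - x| ^ η * (x / 2) ^ (-η)) (nhds x) (nhds 0) := by
    have hcont : Continuous fun y => K * |y - x| ^ η * (x / 2) ^ (-η) :=
      (((by fun_prop : Continuous fun y => |y - x|).rpow_const
        fun _ => .inr hη.le).const_mul K).mul_const _
    exact hcont.tendsto' x 0 (by simp [zero_rpow hη.ne'])
  refine tendsto_iff_norm_sub_tendsto_zero.2 (squeeze_zero' (.of_forall fun _ => norm_nonneg _)
    ?_ hlim)
  filter_upwards [Ioi_mem_nhds (half_lt_self hx)] with y (hy : x / 2 < y)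
  rcases lt_trichotomy y x with hyx | rfl | hxy
  · rw [norm_sub_rev, abs_sub_comm, abs_of_pos (sub_pos.2 hyx)]
    exact hlt hy hyx
  · simp [zero_rpow hη.ne']
  · rw [abs_of_pos (sub_pos.2 hxy)]
    exact hlt (half_lt_self hx) hxy

end Holder

theorem S0_holder_regularity_general {X : Type*} [NormedAddCommGroup X] [NormedSpace ℝ X]
    [CompleteSpace X] {α β q C : ℝ} {h : ℝ → ℝ} {f : ℝ → X} (hh : IsWrightDensity α h)
    (hβ0 : 0 < β) (hβ1 : β ≤ 1) (hβq : β ≤ α * q)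
    (hf : AEStronglyMeasurable f (volume.restrict (Ioi 0)))
    (hf0 : ∀ τ, 0 < τ → ‖f τ - f 0‖ ≤ C * τ ^ q) (T : ℝ) :
    (∀ t, 0 ≤ t → ‖subordinated α h f t - f 0‖ ≤
      C * (Real.Gamma (1 + q) / Real.Gamma (1 + α * q)) * t ^ (α * q)) ∧
    ∃ Ch : ℝ, ∀ s ∈ Icc 0 T, ∀ t ∈ Icc 0 T,
      ‖subordinated α h f t - subordinated α h f s‖ ≤ Ch * |t - s| ^ β := by
  have hq : 0 < q := pos_of_mul_pos_right (hβ0.trans_le hβq) hh.index_pos.le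
  have hle (t : ℝ) (ht : 0 ≤ t) := hh.norm_subordinated_sub_le hq hf hf0 ht
  obtain ⟨L, hL⟩ := hh.exists_norm_subordinated_sub_le_log hq hf hf0
  exact ⟨hle, exists_holder_Icc_of_log hβ0 hβ1 hβq hle hL T⟩

/-- Hölder regularity of `S₀(t) = ∫₀^∞ h_α(θ) T(t^α θ) u₀ dθ` for
`u₀ ∈ D(A^q)` with `β/α ≤ q ≤ 1`, `β < α`: the quantitative bound
`‖S₀(t) - u₀‖ ≤ (C_q Γ(1+q)/Γ(1+αq)) ‖A^q u₀‖ t^{αq}` holds and `S₀` is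
`β`-Hölder continuous on `[0,T]`. Here `u₀ = A^{-q} v` (so `A^q u₀ = v`), and
`A^{-q}` is encoded by the operator `Aqinv` with the standard semigroup
estimates as hypotheses. -/
theorem S0_holder_regularity {X : Type*} [NormedAddCommGroup X] [NormedSpace ℝ X]
    [CompleteSpace X]
    (α β q T Cq : ℝ) (hα : 0 < α) (hα1 : α < 1) (hβ : 0 < β) (hβα : β < α)
    (hq1 : β / α ≤ q) (hq2 : q ≤ 1) (hT : 0 < T) (hCq : 0 ≤ Cq)
    (Tsg : ℝ → X →L[ℝ] X) (hTsg0 : Tsg 0 = ContinuousLinearMap.id ℝ X)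
    (hTsgHolder : ∀ η : ℝ, 0 < η → η < 1 → ∃ Cη : ℝ, ∀ x : X, ∀ s t : ℝ,
      0 < s → s < t → ‖Tsg t x - Tsg s x‖ ≤ Cη * (t - s) ^ η * s ^ (-η) * ‖x‖)
    (hαd : ℝ → ℝ) (hαd_pos : ∀ θ ∈ Set.Ioi (0:ℝ), 0 ≤ hαd θ)
    (hmom : ∀ γ : ℝ, -1 < γ →
      ∫ θ in Set.Ioi (0:ℝ), θ ^ γ * hαd θ = Real.Gamma (1 + γ) / Real.Gamma (1 + α * γ))
    (Aqinv : X →L[ℝ] X)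
    (hAq : ∀ x : X, ∀ t : ℝ, 0 < t → ‖Tsg t (Aqinv x) - Aqinv x‖ ≤ Cq * t ^ q * ‖x‖)
    (u₀ v : X) (hu₀ : u₀ = Aqinv v) :
    (∀ t ∈ Set.Icc (0:ℝ) T,
      ‖(∫ θ in Set.Ioi (0:ℝ), hαd θ • Tsg (t ^ α * θ) u₀) - u₀‖ ≤
        Cq * Real.Gamma (1 + q) / Real.Gamma (1 + α * q) * ‖v‖ * t ^ (α * q)) ∧
    (∃ Ch : ℝ, ∀ s ∈ Set.Icc (0:ℝ) T, ∀ t ∈ Set.Icc (0:ℝ) T,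
      ‖(∫ θ in Set.Ioi (0:ℝ), hαd θ • Tsg (t ^ α * θ) u₀) -
          (∫ θ in Set.Ioi (0:ℝ), hαd θ • Tsg (s ^ α * θ) u₀)‖ ≤ Ch * |t - s| ^ β) := by
  have hβq : β ≤ α * q := by rwa [div_le_iff₀' hα] at hq1
  obtain ⟨Cη, hCη⟩ := hTsgHolder (1 / 2) (by norm_num) (by norm_num)
  have hcont : ContinuousOn (fun τ => Tsg τ u₀) (Ioi 0) :=
    continuousOn_Ioi_of_norm_sub_le (K := Cη * ‖u₀‖) one_half_pos fun s t hs hst =>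
      (hCη u₀ s t hs hst).trans_eq (by ring)
  have hincr (τ : ℝ) (hτ : 0 < τ) : ‖Tsg τ u₀ - Tsg 0 u₀‖ ≤ Cq * ‖v‖ * τ ^ q := by
    rw [hTsg0, ContinuousLinearMap.id_apply, hu₀, mul_right_comm]
    exact hAq v τ hτ
  obtain ⟨hle, hHolder⟩ := S0_holder_regularity_general ⟨hα, hα1, hαd_pos, hmom⟩ hβ
    (hβα.trans hα1).le hβq (hcont.aestronglyMeasurable measurableSet_Ioi) hincr T
  rw [hTsg0, ContinuousLinearMap.id_apply] at hle
  refine ⟨fun t ht => (hle t ht.1).trans_eq (by ring), hHolder⟩
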